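/- There exists a group homomorphism from the quotient Br_2^n/⟨⟨σ_{i,1}² : i = 1, …, n−1⟩⟩ (the Z/2-braid group with each odd generator made an involution) to the n-strand twisted dotted braid group, determined on generators by σ_{i,0} ↦ σ_i and σ_{i,1} ↦ γ_i σ_i γ_{i+1} for every i = 1, …, n−1. -/

import Mathlib

/-!
Send `σ_{i,0}` to `s_i = σ_i` and `σ_{i,1}` to `t_i = γ_i σ_i γ_{i+1}`; the work is to check that
the relators die in the twisted dotted braid group. The relation
`γ_i γ_{i+1} σ_i γ_i γ_{i+1} = σ_i⁻¹` says exactly `t_i² = 1` (`dotted_mul_self`). Far commutativity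
is clear, since every letter of one image commutes with every letter of the other. The braid-like
relations split according to `ε + η + ξ = 0` into four cases.

* `(0,0,0)` is the braid relation.
* `(1,1,0)`: the dots on the middle strand cancel, the outer ones slide out to the two ends, and
  the braid relation remains (`braid_one_one_zero`).
* `(0,1,1)`: since the `t_i` are involutions, this is the previous relation multiplied by
  `t_{i+1} t_i` on the left and on the right (`braid_zero_one_one`).
* `(1,0,1)`: pushing a pair of dots through a crossing inverts it, and the relation becomes the
  conjugate by `γ_{i+1}` of `s_i⁻¹ s_{i+1} s_i = s_{i+1} s_i s_{i+1}⁻¹` (`braid_one_zero_one`).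
-/

namespace MarkedBraids

/-- Defining relators of the `n`-strand ℤ/2-braid group `Br₂ⁿ`. -/
def z2BraidRels (n : ℕ) : Set (FreeGroup (Fin (n - 1) × ZMod 2)) :=
  {w | ∃ (i j : Fin (n - 1)) (ε η : ZMod 2),
      ((i : ℕ) + 2 ≤ (j : ℕ) ∨ (j : ℕ) + 2 ≤ (i : ℕ)) ∧
      w = FreeGroup.of (i, ε) * FreeGroup.of (j, η) *
          (FreeGroup.of (j, η) * FreeGroup.of (i, ε))⁻¹} ∪
  {w | ∃ (i j : Fin (n - 1)) (ε η ξ : ZMod 2),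
      (j : ℕ) = (i : ℕ) + 1 ∧ ε + η + ξ = 0 ∧
      w = FreeGroup.of (i, ε) * FreeGroup.of (j, η) * FreeGroup.of (i, ξ) *
          (FreeGroup.of (j, ξ) * FreeGroup.of (i, η) * FreeGroup.of (j, ε))⁻¹}

/-- The `n`-strand ℤ/2-braid group `Br₂ⁿ`. -/
abbrev Z2BraidGroup (n : ℕ) := PresentedGroup (z2BraidRels n)

/-- The generator σ_{i,ε} of `Br₂ⁿ`. -/
def σ₂ {n : ℕ} (i : Fin (n - 1)) (ε : ZMod 2) : Z2BraidGroup n :=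
  PresentedGroup.of (i, ε)

/-- The left strand `i` of the crossing σ_i, as an index in `Fin n`. -/
def strandL {n : ℕ} (i : Fin (n - 1)) : Fin n :=
  ⟨(i : ℕ), by have := i.isLt; omega⟩

/-- The right strand `i+1` of the crossing σ_i, as an index in `Fin n`. -/
def strandR {n : ℕ} (i : Fin (n - 1)) : Fin n :=
  ⟨(i : ℕ) + 1, by have := i.isLt; omega⟩

/-- The crossing generator σ_i, as a word. -/
def σdw {n : ℕ} (i : Fin (n - 1)) : FreeGroup (Fin (n - 1) ⊕ Fin n) :=
  FreeGroup.of (Sum.inl i)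

/-- The dot generator γ_k, as a word. -/
def γw {n : ℕ} (k : Fin n) : FreeGroup (Fin (n - 1) ⊕ Fin n) :=
  FreeGroup.of (Sum.inr k)

/-- Defining relators of the `n`-strand twisted dotted braid group. -/
def twistedDottedBraidRels (n : ℕ) : Set (FreeGroup (Fin (n - 1) ⊕ Fin n)) :=
  -- far commutativity of crossings
  {w | ∃ i j : Fin (n - 1), ((i : ℕ) + 2 ≤ (j : ℕ) ∨ (j : ℕ) + 2 ≤ (i : ℕ)) ∧
      w = σdw i * σdw j * (σdw j * σdw i)⁻¹} ∪
  -- braid relation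
  {w | ∃ i j : Fin (n - 1), (j : ℕ) = (i : ℕ) + 1 ∧
      w = σdw i * σdw j * σdw i * (σdw j * σdw i * σdw j)⁻¹} ∪
  -- dots are involutions: γ_k² = e
  {w | ∃ k : Fin n, w = γw k * γw k} ∪
  -- dots commute with each other
  {w | ∃ k l : Fin n, w = γw k * γw l * (γw l * γw k)⁻¹} ∪
  -- four dots around a crossing invert it: γ_i γ_{i+1} σ_i γ_i γ_{i+1} = σ_i⁻¹
  {w | ∃ i : Fin (n - 1),
      w = γw (strandL i) * γw (strandR i) * σdw i * γw (strandL i) * γw (strandR i) *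
          ((σdw i)⁻¹)⁻¹} ∪
  -- a dot on a strand not involved in a crossing commutes with that crossing
  {w | ∃ (i : Fin (n - 1)) (k : Fin n), k ≠ strandL i ∧ k ≠ strandR i ∧
      w = γw k * σdw i * (σdw i * γw k)⁻¹}

/-- The `n`-strand twisted dotted braid group. -/
abbrev TwistedDottedBraidGroup (n : ℕ) := PresentedGroup (twistedDottedBraidRels n)

/-- The crossing generator σ_i of . -/
def σd {n : ℕ} (i : Fin (n - 1)) : TwistedDottedBraidGroup n :=
  PresentedGroup.of (Sum.inl i)

/-- The dot generator γ_k of . -/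
def γd {n : ℕ} (k : Fin n) : TwistedDottedBraidGroup n :=
  PresentedGroup.of (Sum.inr k)

section Group

variable {G : Type*} [Group G] {s t x y z : G}

/-- A pair of dots pushed leftwards through a crossing inverts the crossing. -/
theorem mul_dots (hx : x * x = 1) (hy : y * y = 1) (hxy : x * y = y * x)
    (hs : x * y * s * x * y = s⁻¹) : s * (x * y) = x * y * s⁻¹ := by
  have h : x * y * (x * y) = 1 := by
    calc x * y * (x * y) = x * (y * x) * y := by group
      _ = (x * x) * (y * y) := by rw [← hxy]; group
      _ = 1 := by rw [hx, hy, one_mul]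
  calc s * (x * y) = x * y * (x * y) * (s * (x * y)) := by rw [h, one_mul]
    _ = x * y * (x * y * s * x * y) := by group
    _ = x * y * s⁻¹ := by rw [hs]

theorem dotted_mul_self (hx : x * x = 1) (hy : y * y = 1) (hxy : x * y = y * x)
    (hs : x * y * s * x * y = s⁻¹) : x * s * y * (x * s * y) = 1 := by
  calc x * s * y * (x * s * y) = x * (s * (y * x)) * s * y := by group
    _ = (x * x) * (y * y) := by rw [← hxy, mul_dots hx hy hxy hs]; group
    _ = 1 := by rw [hx, hy, one_mul]

/-- Here `x`, `y`, `z` are the dots on three consecutive strands, `s` the crossing of the first two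
and `t` the crossing of the last two. -/
theorem braid_one_one_zero (hy : y * y = 1) (hst : s * t * s = t * s * t)
    (hxt : x * t = t * x) (hzs : z * s = s * z) :
    x * s * y * (y * t * z) * s = t * (x * s * y) * (y * t * z) := by
  calc x * s * y * (y * t * z) * s = x * s * (y * y) * t * (z * s) := by group
    _ = x * (s * t * s) * z := by rw [hy, hzs]; group
    _ = (x * t) * s * t * z := by rw [hst]; group
    _ = t * x * s * (y * y) * t * z := by rw [hxt, hy]; group
    _ = t * (x * s * y) * (y * t * z) := by group

theorem braid_zero_one_one {a₀ a₁ b₀ b₁ : G} (ha : a₁ * a₁ = 1) (hb : b₁ * b₁ = 1)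
    (h : a₁ * b₁ * a₀ = b₀ * a₁ * b₁) : a₀ * b₁ * a₁ = b₁ * a₁ * b₀ := by
  calc a₀ * b₁ * a₁ = b₁ * (a₁ * a₁) * b₁ * a₀ * b₁ * a₁ := by rw [ha, mul_one, hb, one_mul]
    _ = b₁ * a₁ * (a₁ * b₁ * a₀) * b₁ * a₁ := by group
    _ = b₁ * a₁ * b₀ * a₁ * (b₁ * b₁) * a₁ := by rw [h]; group
    _ = b₁ * a₁ * b₀ * (a₁ * a₁) := by rw [hb]; group
    _ = b₁ * a₁ * b₀ := by rw [ha, mul_one]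

theorem braid_one_zero_one (hx : x * x = 1) (hy : y * y = 1) (hz : z * z = 1)
    (hxy : x * y = y * x) (hyz : y * z = z * y)
    (hs : x * y * s * x * y = s⁻¹) (ht : y * z * t * y * z = t⁻¹)
    (hst : s * t * s = t * s * t) (hxt : x * t = t * x) (hzs : z * s = s * z) :
    x * s * y * t * (x * s * y) = y * t * z * s * (y * t * z) := by
  have hconj : s⁻¹ * t * s = t * s * t⁻¹ := by
    rw [mul_assoc, inv_mul_eq_iff_eq_mul, ← mul_assoc, ← mul_assoc, eq_mul_inv_iff_mul_eq, hst]
  -- The pair `y`, `z` moves rightwards through `t` on the other side of the relation.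
  have ht' : y * z * t = t⁻¹ * (y * z) := by
    have h := mul_dots hy hz hyz ht
    rw [eq_inv_mul_iff_mul_eq]
    calc t * (y * z * t) = t * (y * z) * t := by group
      _ = y * z := by rw [h]; group
  calc x * s * y * t * (x * s * y) = x * s * y * (t * x) * s * y := by group
    _ = x * (s * (y * x)) * t * s * y := by rw [← hxt]; group
    _ = (x * x) * y * (s⁻¹ * t * s) * y := by rw [← hxy, mul_dots hx hy hxy hs]; group
    _ = y * t * s * t⁻¹ * y * (z * z) := by rw [hx, hz, hconj]; group
    _ = y * t * s * (t⁻¹ * (y * z)) * z := by group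
    _ = y * t * s * (z * y) * t * z := by rw [← ht', ← hyz]; group
    _ = y * t * (s * z) * y * t * z := by group
    _ = y * t * z * s * (y * t * z) := by rw [← hzs]; group

end Group

section Images

variable {n : ℕ}

theorem σd_comm {i j : Fin (n - 1)} (h : (i : ℕ) + 2 ≤ (j : ℕ) ∨ (j : ℕ) + 2 ≤ (i : ℕ)) :
    σd i * σd j = σd j * σd i :=
  mul_inv_eq_one.mp <| PresentedGroup.one_of_mem (rels := twistedDottedBraidRels n) <|
    Or.inl <| Or.inl <| Or.inl <| Or.inl <| Or.inl ⟨i, j, h, rfl⟩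

theorem σd_braid {i j : Fin (n - 1)} (h : (j : ℕ) = (i : ℕ) + 1) :
    σd i * σd j * σd i = σd j * σd i * σd j :=
  mul_inv_eq_one.mp <| PresentedGroup.one_of_mem (rels := twistedDottedBraidRels n) <|
    Or.inl <| Or.inl <| Or.inl <| Or.inl <| Or.inr ⟨i, j, h, rfl⟩

theorem γd_mul_self (k : Fin n) : γd k * γd k = 1 :=
  PresentedGroup.one_of_mem (rels := twistedDottedBraidRels n) <|
    Or.inl <| Or.inl <| Or.inl <| Or.inr ⟨k, rfl⟩

theorem γd_comm (k l : Fin n) : γd k * γd l = γd l * γd k :=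
  mul_inv_eq_one.mp <| PresentedGroup.one_of_mem (rels := twistedDottedBraidRels n) <|
    Or.inl <| Or.inl <| Or.inr ⟨k, l, rfl⟩

theorem γd_σd_γd (i : Fin (n - 1)) :
    γd (strandL i) * γd (strandR i) * σd i * γd (strandL i) * γd (strandR i) = (σd i)⁻¹ :=
  mul_inv_eq_one.mp <| PresentedGroup.one_of_mem (rels := twistedDottedBraidRels n) <|
    Or.inl <| Or.inr ⟨i, rfl⟩

theorem γd_σd_comm {i : Fin (n - 1)} {k : Fin n} (hL : k ≠ strandL i) (hR : k ≠ strandR i) :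
    γd k * σd i = σd i * γd k :=
  mul_inv_eq_one.mp <| PresentedGroup.one_of_mem (rels := twistedDottedBraidRels n) <|
    Or.inr ⟨i, k, hL, hR, rfl⟩

/-- The image of `σ_{i,ε}`: the crossing `σ_i` for `ε = 0`, and `γ_i σ_i γ_{i+1}` for `ε = 1`. -/
def imageGen (p : Fin (n - 1) × ZMod 2) : TwistedDottedBraidGroup n :=
  if p.2 = 0 then σd p.1 else γd (strandL p.1) * σd p.1 * γd (strandR p.1)

theorem imageGen_zero (i : Fin (n - 1)) : imageGen (i, 0) = σd i := if_pos rfl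

theorem imageGen_one (i : Fin (n - 1)) :
    imageGen (i, 1) = γd (strandL i) * σd i * γd (strandR i) := if_neg one_ne_zero

theorem imageGen_one_mul_self (i : Fin (n - 1)) :
    imageGen (i, 1) * imageGen (i, 1) = 1 := by
  rw [imageGen_one]
  exact dotted_mul_self (γd_mul_self _) (γd_mul_self _) (γd_comm _ _) (γd_σd_γd i)

theorem imageGen_comm {i j : Fin (n - 1)}
    (h : (i : ℕ) + 2 ≤ (j : ℕ) ∨ (j : ℕ) + 2 ≤ (i : ℕ)) (ε η : ZMod 2) :
    Commute (imageGen (i, ε)) (imageGen (j, η)) := by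
  have hs : Commute (σd i) (σd j) := σd_comm h
  have hγ (k l : Fin n) : Commute (γd k) (γd l) := γd_comm k l
  have hLj : Commute (γd (strandL i)) (σd j) := by
    apply γd_σd_comm <;> simp only [ne_eq, strandL, strandR, Fin.mk.injEq] <;> omega
  have hRj : Commute (γd (strandR i)) (σd j) := by
    apply γd_σd_comm <;> simp only [ne_eq, strandL, strandR, Fin.mk.injEq] <;> omega
  have hLi : Commute (σd i) (γd (strandL j)) := by
    symm; apply γd_σd_comm <;> simp only [ne_eq, strandL, strandR, Fin.mk.injEq] <;> omega
  have hRi : Commute (σd i) (γd (strandR j)) := by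
    symm; apply γd_σd_comm <;> simp only [ne_eq, strandL, strandR, Fin.mk.injEq] <;> omega
  unfold imageGen
  split_ifs
  · exact hs
  · exact (hLi.mul_right hs).mul_right hRi
  · exact (hLj.mul_left hs).mul_left hRj
  · exact (((hγ _ _).mul_right hLj).mul_right (hγ _ _)).mul_left
      ((hLi.mul_right hs).mul_right hRi) |>.mul_left
      (((hγ _ _).mul_right hRj).mul_right (hγ _ _))

theorem imageGen_braid {i j : Fin (n - 1)} (h : (j : ℕ) = (i : ℕ) + 1) {ε η ξ : ZMod 2}
    (hsum : ε + η + ξ = 0) :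
    imageGen (i, ε) * imageGen (j, η) * imageGen (i, ξ) =
      imageGen (j, ξ) * imageGen (i, η) * imageGen (j, ε) := by
  have hmid : strandR i = strandL j := by simp [strandL, strandR, h]
  have hxt : γd (strandL i) * σd j = σd j * γd (strandL i) := by
    apply γd_σd_comm <;> simp only [ne_eq, strandL, strandR, Fin.mk.injEq] <;> omega
  have hzs : γd (strandR j) * σd i = σd i * γd (strandR j) := by
    apply γd_σd_comm <;> simp only [ne_eq, strandL, strandR, Fin.mk.injEq] <;> omega
  have h110 : imageGen (i, 1) * imageGen (j, 1) * imageGen (i, 0) =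
      imageGen (j, 0) * imageGen (i, 1) * imageGen (j, 1) := by
    simp only [imageGen_zero, imageGen_one, hmid]
    exact braid_one_one_zero (γd_mul_self _) (σd_braid h) hxt hzs
  have hcases : ∀ ε η ξ : ZMod 2, ε + η + ξ = 0 →
      (ε = 0 ∧ η = 0 ∧ ξ = 0) ∨ (ε = 1 ∧ η = 1 ∧ ξ = 0) ∨
      (ε = 0 ∧ η = 1 ∧ ξ = 1) ∨ (ε = 1 ∧ η = 0 ∧ ξ = 1) := by decide
  obtain ⟨rfl, rfl, rfl⟩ | ⟨rfl, rfl, rfl⟩ | ⟨rfl, rfl, rfl⟩ | ⟨rfl, rfl, rfl⟩ :=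
    hcases ε η ξ hsum
  · simpa only [imageGen_zero] using σd_braid h
  · exact h110
  · exact braid_zero_one_one (imageGen_one_mul_self i) (imageGen_one_mul_self j) h110
  · have hs := γd_σd_γd i
    rw [hmid] at hs
    simp only [imageGen_zero, imageGen_one, hmid]
    exact braid_one_zero_one (γd_mul_self _) (γd_mul_self _) (γd_mul_self _) (γd_comm _ _)
      (γd_comm _ _) hs (γd_σd_γd j) (σd_braid h) hxt hzs

theorem lift_imageGen_eq_one :
    ∀ r ∈ z2BraidRels n, FreeGroup.lift (imageGen (n := n)) r = 1 := by
  rintro r (⟨i, j, ε, η, h, rfl⟩ | ⟨i, j, ε, η, ξ, h, hsum, rfl⟩)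
  · rw [map_mul, map_inv, mul_inv_eq_one]
    simpa only [map_mul, FreeGroup.lift_apply_of] using (imageGen_comm h ε η).eq
  · rw [map_mul, map_inv, mul_inv_eq_one]
    simpa only [map_mul, FreeGroup.lift_apply_of] using imageGen_braid h hsum

/-- The homomorphism out of `Br₂ⁿ` itself, before passing to the quotient. -/
def z2BraidHom (n : ℕ) : Z2BraidGroup n →* TwistedDottedBraidGroup n :=
  PresentedGroup.toGroup lift_imageGen_eq_one

theorem z2BraidHom_σ₂ (i : Fin (n - 1)) (ε : ZMod 2) :
    z2BraidHom n (σ₂ i ε) = imageGen (i, ε) :=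
  PresentedGroup.toGroup.of _

end Images

/-- There is a homomorphism from `Br₂ⁿ` modulo the normal closure of the
squares of the odd generators to the twisted dotted braid group, with
σ_{i,0} ↦ σ_i and σ_{i,1} ↦ γ_i σ_i γ_{i+1}. -/
theorem exists_hom_z2BraidQuot_to_twistedDottedBraid (n : ℕ) :
    ∃ f : Z2BraidGroup n ⧸
        Subgroup.normalClosure {x : Z2BraidGroup n | ∃ i : Fin (n - 1), x = σ₂ i 1 * σ₂ i 1}
          →* TwistedDottedBraidGroup n,
      ∀ i : Fin (n - 1),
        f (QuotientGroup.mk (σ₂ i 0)) = σd i ∧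
        f (QuotientGroup.mk (σ₂ i 1)) = γd (strandL i) * σd i * γd (strandR i) := by
  refine ⟨QuotientGroup.lift _ (z2BraidHom n) ?_, fun i => ⟨?_, ?_⟩⟩
  · apply Subgroup.normalClosure_le_normal
    rintro _ ⟨i, rfl⟩
    simp only [SetLike.mem_coe, MonoidHom.mem_ker, map_mul, z2BraidHom_σ₂, imageGen_one_mul_self]
  · exact (z2BraidHom_σ₂ i 0).trans (imageGen_zero i)
  · exact (z2BraidHom_σ₂ i 1).trans (imageGen_one i)

end MarkedBraids
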